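/- Every formula is 0/1-assignable: to any formula F of gradual classical logic there corresponds at least one formula F_a in unit chain expansion to which F reduces, and for every such F_a and every valuation frame M the value [M ⊨ F_a] is a well-defined element of {0, 1}. -/

import Mathlib

/-!
Call a formula normalizable if it reduces to some formula in unit chain expansion. Every formula is
normalizable by structural induction, because each connective preserves the class.

For `∧` and `∨` this is immediate. For `⋗` it suffices to treat `F ⋗ G` with `F` and `G` already in
unit chain expansion. If `F` is a single element of `𝒮`, rules ⋗4 and ⋗5 distribute it over `G`
(`Normalizable.base_obat`). If `F` is a unit chain `s ⋗ F'`, rule ⋗1 produces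
`(s ⋗ G) ∧ ((s ⋗ F') ∨ (s ⋗ (F' ⋗ G)))`, whose only new left-nested part `F' ⋗ G` has a shorter
left chain, so induction on that chain applies (`Normalizable.chain_obat`). Otherwise rules ⋗2 and
⋗3 split `F` (`Normalizable.obat`). For `¬`, De Morgan and rule ¬4 push the negation to the tail of
each chain (`Normalizable.neg`).

The value is in `{0, 1}` since it is built from local values in `{0, 1}` by `min` and `max`
(`Frame.valAux_zero_or_one`).
-/

namespace GradualLogic

/-- Elements of 𝒮 = 𝒜 ∪ {⊤, ⊥}. -/
inductive GS (A : Type) : Type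
  | lit : A → GS A
  | top : GS A
  | bot : GS A

/-- Complement on 𝒮, given the involutive complement `c` on literals. -/
def GS.compl {A : Type} (c : A → A) : GS A → GS A
  | .lit a => .lit (c a)
  | .top => .bot
  | .bot => .top

/-- Formulas of gradual classical logic: F ::= s | F ∧ F | F ∨ F | ¬F | F ⋗ F. -/
inductive GF (A : Type) : Type
  | base : GS A → GF A
  | conj : GF A → GF A → GF A
  | disj : GF A → GF A → GF A
  | neg  : GF A → GF A
  | obat : GF A → GF A → GF A

/-- One-step reduction (closure of the ¬- and ⋗-rules under subformula contexts). -/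
inductive Step {A : Type} (c : A → A) : GF A → GF A → Prop
  | neg1 (x : GS A) :
      Step c (GF.neg (GF.base x)) (GF.base (GS.compl c x))
  | neg2 (F₁ F₂ : GF A) :
      Step c (GF.neg (GF.conj F₁ F₂)) (GF.disj (GF.neg F₁) (GF.neg F₂))
  | neg3 (F₁ F₂ : GF A) :
      Step c (GF.neg (GF.disj F₁ F₂)) (GF.conj (GF.neg F₁) (GF.neg F₂))
  | neg4 (x : GS A) (F₂ : GF A) :
      Step c (GF.neg (GF.obat (GF.base x) F₂))
        (GF.disj (GF.base (GS.compl c x)) (GF.obat (GF.base x) (GF.neg F₂)))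
  | ob1 (F₁ F₂ F₃ : GF A) :
      Step c (GF.obat (GF.obat F₁ F₂) F₃)
        (GF.conj (GF.obat F₁ F₃)
          (GF.disj (GF.obat F₁ F₂) (GF.obat F₁ (GF.obat F₂ F₃))))
  | ob2 (F₁ F₂ F₃ : GF A) :
      Step c (GF.obat (GF.conj F₁ F₂) F₃) (GF.conj (GF.obat F₁ F₃) (GF.obat F₂ F₃))
  | ob3 (F₁ F₂ F₃ : GF A) :
      Step c (GF.obat (GF.disj F₁ F₂) F₃) (GF.disj (GF.obat F₁ F₃) (GF.obat F₂ F₃))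
  | ob4 (F₁ F₂ F₃ : GF A) :
      Step c (GF.obat F₁ (GF.conj F₂ F₃)) (GF.conj (GF.obat F₁ F₂) (GF.obat F₁ F₃))
  | ob5 (F₁ F₂ F₃ : GF A) :
      Step c (GF.obat F₁ (GF.disj F₂ F₃)) (GF.disj (GF.obat F₁ F₂) (GF.obat F₁ F₃))
  | conj_left {F F' : GF A} (G : GF A) :
      Step c F F' → Step c (GF.conj F G) (GF.conj F' G)
  | conj_right (F : GF A) {G G' : GF A} :
      Step c G G' → Step c (GF.conj F G) (GF.conj F G')
  | disj_left {F F' : GF A} (G : GF A) :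
      Step c F F' → Step c (GF.disj F G) (GF.disj F' G)
  | disj_right (F : GF A) {G G' : GF A} :
      Step c G G' → Step c (GF.disj F G) (GF.disj F G')
  | neg_congr {F F' : GF A} :
      Step c F F' → Step c (GF.neg F) (GF.neg F')
  | obat_left {F F' : GF A} (G : GF A) :
      Step c F F' → Step c (GF.obat F G) (GF.obat F' G)
  | obat_right (F : GF A) {G G' : GF A} :
      Step c G G' → Step c (GF.obat F G) (GF.obat F G')

/-- `Reduces c F G`: F ↦* G in finitely many (possibly zero) steps. -/
def Reduces {A : Type} (c : A → A) : GF A → GF A → Prop :=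
  Relation.ReflTransGen (Step c)

/-- Unit chains s₀ ⋗ s₁ ⋗ ⋯ ⋗ s_{k+1} (right-associated, all components in 𝒮). -/
inductive IsUnitChain {A : Type} : GF A → Prop
  | base (x y : GS A) : IsUnitChain (GF.obat (GF.base x) (GF.base y))
  | cons (x : GS A) {F : GF A} : IsUnitChain F → IsUnitChain (GF.obat (GF.base x) F)

/-- Unit chain expansion: built from elements of 𝒮 and unit chains using only ∧ and ∨. -/
inductive UCE {A : Type} : GF A → Prop
  | base (x : GS A) : UCE (GF.base x)
  | chain {F : GF A} : IsUnitChain F → UCE F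
  | conj {F G : GF A} : UCE F → UCE G → UCE (GF.conj F G)
  | disj {F G : GF A} : UCE F → UCE G → UCE (GF.disj F G)

/-- Formulas in which ¬ does not occur. -/
inductive NegFree {A : Type} : GF A → Prop
  | base (x : GS A) : NegFree (GF.base x)
  | conj {F G : GF A} : NegFree F → NegFree G → NegFree (GF.conj F G)
  | disj {F G : GF A} : NegFree F → NegFree G → NegFree (GF.disj F G)
  | obat {F G : GF A} : NegFree F → NegFree G → NegFree (GF.obat F G)

/-- A valuation frame (I, J): local interpretation I with the required conditions;
the global interpretation J is determined by I and is built into `Frame.val` below. -/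
structure Frame (A : Type) (c : A → A) where
  I : List (GS A) → GS A → ℕ
  I01 : ∀ ψ x, I ψ x = 0 ∨ I ψ x = 1
  Itop : ∀ ψ, I ψ GS.top = 1
  Ibot : ∀ ψ, I ψ GS.bot = 0
  Icompl : ∀ ψ x, I ψ (GS.compl c x) = 1 - I ψ x
  Isync : ∀ ψ ψ' x, ψ.length = ψ'.length → I ψ x = I ψ' x

/-- The valuation of a formula in unit chain expansion, relative to the sequence ψ of
𝒮-elements already traversed: a unit chain s₀ ⋗ ⋯ ⋗ s_k receives the global value
J(s₀.⋯.s_k) (the min of the local values along its prefixes), ∧ is min, ∨ is max.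
(The value on formulas not in unit chain expansion is junk and never used.) -/
def Frame.valAux {A : Type} {c : A → A} (M : Frame A c) : List (GS A) → GF A → ℕ
  | ψ, GF.base x => M.I ψ x
  | ψ, GF.conj F G => min (M.valAux ψ F) (M.valAux ψ G)
  | ψ, GF.disj F G => max (M.valAux ψ F) (M.valAux ψ G)
  | _, GF.neg _ => 0
  | ψ, GF.obat (GF.base x) G => min (M.I ψ x) (M.valAux (ψ ++ [x]) G)
  | _, GF.obat _ _ => 0

/-- `[M ⊨ F]` for F in unit chain expansion. -/
def Frame.val {A : Type} {c : A → A} (M : Frame A c) (F : GF A) : ℕ :=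
  M.valAux [] F

/-- Distribute `s ⋗ -` over the ∧/∨-structure of a formula (the ⋗-reductions 4 and 5). -/
def distOb {A : Type} (x : GS A) : GF A → GF A
  | GF.conj F G => GF.conj (distOb x F) (distOb x G)
  | GF.disj F G => GF.disj (distOb x F) (distOb x G)
  | F => GF.obat (GF.base x) F

/-- recursiveReduce on formulas in unit chain expansion: swap ∧/∨, complement the
non-chain 𝒮-elements, replace a chain with head s and tail T by
sᶜ ∨ (s ⋗ recursiveReduce T), reduced into unit chain expansion via ⋗-reductions. -/
def recursiveReduce {A : Type} (c : A → A) : GF A → GF A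
  | GF.base x => GF.base (GS.compl c x)
  | GF.conj F G => GF.disj (recursiveReduce c F) (recursiveReduce c G)
  | GF.disj F G => GF.conj (recursiveReduce c F) (recursiveReduce c G)
  | GF.obat (GF.base x) F =>
      GF.disj (GF.base (GS.compl c x)) (distOb x (recursiveReduce c F))
  | GF.obat F G => GF.obat F G
  | GF.neg F => GF.neg F

/-- Validity: every unit chain expansion that F reduces to receives value 1 in
every valuation frame. -/
def Valid {A : Type} (c : A → A) (F : GF A) : Prop :=
  ∀ (M : Frame A c) (G : GF A), UCE G → Reduces c F G → M.val G = 1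

/-- The fifteen shape pairs of the bisimulation theorem. -/
inductive ShapePair {A : Type} (c : A → A) : GF A → GF A → Prop
  | s1 (Fa Fb Fc : GF A) :
      ShapePair c (GF.obat (GF.conj Fa Fb) Fc) (GF.conj (GF.obat Fa Fc) (GF.obat Fb Fc))
  | s2 (Fa Fb Fc : GF A) :
      ShapePair c (GF.obat (GF.disj Fa Fb) Fc) (GF.disj (GF.obat Fa Fc) (GF.obat Fb Fc))
  | s3 (Fa Fb Fc : GF A) :
      ShapePair c (GF.obat Fa (GF.conj Fb Fc)) (GF.conj (GF.obat Fa Fb) (GF.obat Fa Fc))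
  | s4 (Fa Fb Fc : GF A) :
      ShapePair c (GF.obat Fa (GF.disj Fb Fc)) (GF.disj (GF.obat Fa Fb) (GF.obat Fa Fc))
  | s5 (Fa Fb Fc : GF A) :
      ShapePair c (GF.obat (GF.obat Fa Fb) Fc)
        (GF.conj (GF.obat Fa Fc) (GF.disj (GF.obat Fa Fb) (GF.obat Fa (GF.obat Fb Fc))))
  | s6 (x : GS A) :
      ShapePair c (GF.neg (GF.base x)) (GF.base (GS.compl c x))
  | s7 (F₁ F₂ : GF A) :
      ShapePair c (GF.neg (GF.conj F₁ F₂)) (GF.disj (GF.neg F₁) (GF.neg F₂))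
  | s8 (F₁ F₂ : GF A) :
      ShapePair c (GF.neg (GF.disj F₁ F₂)) (GF.conj (GF.neg F₁) (GF.neg F₂))
  | s9 (x : GS A) (F₂ : GF A) :
      ShapePair c (GF.neg (GF.obat (GF.base x) F₂))
        (GF.disj (GF.base (GS.compl c x)) (GF.obat (GF.base x) (GF.neg F₂)))
  | s10 (Fa : GF A) : ShapePair c (GF.disj Fa Fa) Fa
  | s11 (Fa : GF A) : ShapePair c (GF.conj Fa Fa) Fa
  | s12 (Fa Fb : GF A) : ShapePair c (GF.conj Fa Fb) (GF.conj Fb Fa)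
  | s13 (Fa Fb : GF A) : ShapePair c (GF.disj Fa Fb) (GF.disj Fb Fa)
  | s14 (Fa Fb Fc : GF A) :
      ShapePair c (GF.conj Fa (GF.conj Fb Fc)) (GF.conj (GF.conj Fa Fb) Fc)
  | s15 (Fa Fb Fc : GF A) :
      ShapePair c (GF.disj Fa (GF.disj Fb Fc)) (GF.disj (GF.disj Fa Fb) Fc)

/-- `ReplaceAt R F F'`: F' is obtained from F by replacing one occurrence of a
subformula related by R (in either direction). -/
inductive ReplaceAt {A : Type} (R : GF A → GF A → Prop) : GF A → GF A → Prop
  | here {F F' : GF A} : R F F' → ReplaceAt R F F'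
  | here_rev {F F' : GF A} : R F' F → ReplaceAt R F F'
  | conj_left {F F' : GF A} (G : GF A) :
      ReplaceAt R F F' → ReplaceAt R (GF.conj F G) (GF.conj F' G)
  | conj_right (F : GF A) {G G' : GF A} :
      ReplaceAt R G G' → ReplaceAt R (GF.conj F G) (GF.conj F G')
  | disj_left {F F' : GF A} (G : GF A) :
      ReplaceAt R F F' → ReplaceAt R (GF.disj F G) (GF.disj F' G)
  | disj_right (F : GF A) {G G' : GF A} :
      ReplaceAt R G G' → ReplaceAt R (GF.disj F G) (GF.disj F G')
  | neg_congr {F F' : GF A} :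
      ReplaceAt R F F' → ReplaceAt R (GF.neg F) (GF.neg F')
  | obat_left {F F' : GF A} (G : GF A) :
      ReplaceAt R F F' → ReplaceAt R (GF.obat F G) (GF.obat F' G)
  | obat_right (F : GF A) {G G' : GF A} :
      ReplaceAt R G G' → ReplaceAt R (GF.obat F G) (GF.obat F G')

/-- `F` reduces to at least one formula in unit chain expansion. -/
def Normalizable {A : Type} (c : A → A) (F : GF A) : Prop :=
  ∃ H : GF A, UCE H ∧ Reduces c F H

namespace Normalizable

variable {A : Type} {c : A → A} {F G H : GF A}

theorem of_uce (h : UCE F) : Normalizable c F :=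
  ⟨F, h, Relation.ReflTransGen.refl⟩

theorem of_reduces (hFG : Reduces c F G) : Normalizable c G → Normalizable c F :=
  fun ⟨H, hH, hGH⟩ => ⟨H, hH, hFG.trans hGH⟩

theorem of_step (hFG : Step c F G) : Normalizable c G → Normalizable c F :=
  of_reduces (Relation.ReflTransGen.single hFG)

theorem conj : Normalizable c F → Normalizable c G → Normalizable c (GF.conj F G) :=
  fun ⟨F', hF', hF⟩ ⟨G', hG', hG⟩ =>
    ⟨GF.conj F' G', UCE.conj hF' hG',
      (hF.lift (fun X => GF.conj X G) fun _ _ => Step.conj_left G).trans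
        (hG.lift (GF.conj F') fun _ _ => Step.conj_right F')⟩

theorem disj : Normalizable c F → Normalizable c G → Normalizable c (GF.disj F G) :=
  fun ⟨F', hF', hF⟩ ⟨G', hG', hG⟩ =>
    ⟨GF.disj F' G', UCE.disj hF' hG',
      (hF.lift (fun X => GF.disj X G) fun _ _ => Step.disj_left G).trans
        (hG.lift (GF.disj F') fun _ _ => Step.disj_right F')⟩

/-- A single element of `𝒮` on the left of `⋗` distributes over the `∧`/`∨`-structure on the
right, lengthening each chain there by one. -/
theorem base_obat_of_uce (x : GS A) (hG : UCE G) :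
    Normalizable c (GF.obat (GF.base x) G) := by
  induction hG with
  | base y => exact of_uce (UCE.chain (IsUnitChain.base x y))
  | chain h => exact of_uce (UCE.chain (IsUnitChain.cons x h))
  | conj _ _ ihF ihG => exact of_step (Step.ob4 _ _ _) (ihF.conj ihG)
  | disj _ _ ihF ihG => exact of_step (Step.ob5 _ _ _) (ihF.disj ihG)

theorem base_obat (x : GS A) :
    Normalizable c G → Normalizable c (GF.obat (GF.base x) G) :=
  fun ⟨_, hG', hG⟩ =>
    of_reduces (hG.lift (GF.obat (GF.base x)) fun _ _ => Step.obat_right _)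
      (base_obat_of_uce x hG')

/-- Rule ⋗1 turns `(s ⋗ F') ⋗ G` into a formula in which the only chain on the left of a `⋗` is the
shorter `F'`, so the claim follows by induction on the left chain. -/
theorem chain_obat (hF : IsUnitChain F) (hG : Normalizable c G) :
    Normalizable c (GF.obat F G) := by
  induction hF with
  | base x y =>
    exact of_step (Step.ob1 _ _ _) ((hG.base_obat x).conj
      ((of_uce (UCE.chain (IsUnitChain.base x y))).disj ((hG.base_obat y).base_obat x)))
  | cons x hF' ih =>
    exact of_step (Step.ob1 _ _ _) ((hG.base_obat x).conj
      ((of_uce (UCE.chain (IsUnitChain.cons x hF'))).disj (ih.base_obat x)))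

theorem obat_of_uce (hF : UCE F) (hG : Normalizable c G) :
    Normalizable c (GF.obat F G) := by
  induction hF with
  | base x => exact hG.base_obat x
  | chain h => exact chain_obat h hG
  | conj _ _ ih₁ ih₂ => exact of_step (Step.ob2 _ _ _) (ih₁.conj ih₂)
  | disj _ _ ih₁ ih₂ => exact of_step (Step.ob3 _ _ _) (ih₁.disj ih₂)

theorem obat : Normalizable c F → Normalizable c G → Normalizable c (GF.obat F G) :=
  fun ⟨_, hF', hF⟩ hG =>
    of_reduces (hF.lift (fun X => GF.obat X G) fun _ _ => Step.obat_left G)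
      (obat_of_uce hF' hG)

theorem neg_chain (hF : IsUnitChain F) : Normalizable c (GF.neg F) := by
  induction hF with
  | base x y =>
    exact of_step (Step.neg4 _ _) ((of_uce (UCE.base _)).disj
      ((of_step (Step.neg1 y) (of_uce (UCE.base _))).base_obat x))
  | cons x _ ih =>
    exact of_step (Step.neg4 _ _) ((of_uce (UCE.base _)).disj (ih.base_obat x))

theorem neg_of_uce (hF : UCE F) : Normalizable c (GF.neg F) := by
  induction hF with
  | base x => exact of_step (Step.neg1 x) (of_uce (UCE.base _))
  | chain h => exact neg_chain h
  | conj _ _ ih₁ ih₂ => exact of_step (Step.neg2 _ _) (ih₁.disj ih₂)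
  | disj _ _ ih₁ ih₂ => exact of_step (Step.neg3 _ _) (ih₁.conj ih₂)

theorem neg : Normalizable c F → Normalizable c (GF.neg F) :=
  fun ⟨_, hF', hF⟩ =>
    of_reduces (hF.lift GF.neg fun _ _ => Step.neg_congr) (neg_of_uce hF')

end Normalizable

theorem normalizable {A : Type} (c : A → A) (F : GF A) : Normalizable c F := by
  induction F with
  | base x => exact .of_uce (UCE.base x)
  | conj _ _ ih₁ ih₂ => exact ih₁.conj ih₂
  | disj _ _ ih₁ ih₂ => exact ih₁.disj ih₂
  | neg _ ih => exact ih.neg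
  | obat _ _ ih₁ ih₂ => exact ih₁.obat ih₂

/-- This holds for every formula, since the junk value outside unit chain expansion is `0`. -/
theorem Frame.valAux_zero_or_one {A : Type} {c : A → A} (M : Frame A c) (ψ : List (GS A))
    (F : GF A) : M.valAux ψ F = 0 ∨ M.valAux ψ F = 1 := by
  induction F generalizing ψ with
  | base x => simpa only [Frame.valAux] using M.I01 ψ x
  | conj F G ihF ihG =>
    have hF := ihF ψ
    have hG := ihG ψ
    simp only [Frame.valAux]
    omega
  | disj F G ihF ihG =>
    have hF := ihF ψ
    have hG := ihG ψ
    simp only [Frame.valAux]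
    omega
  | neg F _ => simp [Frame.valAux]
  | obat F G _ ihG =>
    cases F with
    | base x =>
      have hx := M.I01 ψ x
      have hG := ihG (ψ ++ [x])
      simp only [Frame.valAux]
      omega
    | _ => simp [Frame.valAux]

/-- Every formula is 0/1-assignable: to any formula F there
corresponds at least one formula Fa in unit chain expansion to which F reduces,
and for every such Fa and every valuation frame M, [M ⊨ Fa] ∈ {0, 1}. -/
theorem zero_one_assignable (A : Type) [Countable A] [Infinite A]
    (c : A → A) (hc : Function.Involutive c) (F : GF A) :
    (∃ Fa : GF A, UCE Fa ∧ Reduces c F Fa) ∧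
      ∀ Fa : GF A, UCE Fa → Reduces c F Fa →
        ∀ M : Frame A c, M.val Fa = 0 ∨ M.val Fa = 1 := by
  exact ⟨normalizable c F, fun Fa _ _ M => M.valAux_zero_or_one [] Fa⟩

end GradualLogic
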